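/- Assume T is trace-class and μ-a.e. point of X is a Lebesgue point of f. Then Σᵢ λᵢ = ∫_X k_T(x,x) dμ(x) = (1/2) ∫_X ∫_X d(x,y)² dμ(x) dμ(y). -/

import Mathlib

/-!
Write `G = k_T`. The kernel is continuous and in `L²(μ ⊗ μ)`, and its spectral expansion
`∑ λᵢ uᵢ(x) uᵢ(y)` converges to it in `L²(μ ⊗ μ)`; the diagonal is typically a null set, so the
point is to show that the expansion nevertheless holds on it almost everywhere.

Let `x` be a Lebesgue point of `f = ∑ |λᵢ| uᵢ²` at which this series converges, and let `B` be a
small ball around `x`. `L²`-convergence allows integrating the expansion over `B × B`, and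
Cauchy–Schwarz on `B` bounds its tail by that of `f` (`abs_setIntegral_sub_sum_le`):
`|⨍_{B×B} G - ∑_{i<N} λᵢ (⨍_B uᵢ)²| ≤ ⨍_B f - ∑_{i<N} |λᵢ| ⨍_B uᵢ²`.
Let the radius tend to `0`. By continuity of `G` and of the `uᵢ` with `λᵢ ≠ 0`, and by the Lebesgue
point property for `f`, this becomes
`|G(x,x) - ∑_{i<N} λᵢ uᵢ(x)²| ≤ f(x) - ∑_{i<N} |λᵢ| uᵢ(x)²`.
The right-hand side tends to `0` as `N → ∞`, so `G(x,x) = ∑ λᵢ uᵢ(x)²` (`hasSum_diag`). Integrating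
this identity, valid for a.e. `x`, gives `∫ G(x,x) dμ = ∑ λᵢ`. The second equality is a direct
computation from the definition of the centering (`integral_mdsKT_diag`).
-/

open MeasureTheory Metric Filter Topology

noncomputable section

/-- The MDS kernel `k(x,y) = -(1/2) d(x,y)²`. -/
def mdsK {X : Type*} [MetricSpace X] (x y : X) : ℝ := -(1/2) * dist x y ^ 2

/-- The centered MDS kernel. -/
def mdsKT {X : Type*} [MetricSpace X] [MeasurableSpace X] (μ : Measure X) (x y : X) : ℝ :=
  mdsK x y - (∫ y', mdsK x y' ∂μ) - (∫ x', mdsK x' y ∂μ) + ∫ x', ∫ y', mdsK x' y' ∂μ ∂μ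

/-- `x` is a Lebesgue point of `f`: all balls around `x` have positive measure and the averages
of `f` over `B_r(x)` converge to `f(x)` as `r → 0⁺`. -/
def IsLebPoint {X : Type*} [MetricSpace X] [MeasurableSpace X]
    (μ : Measure X) (f : X → ℝ) (x : X) : Prop :=
  (∀ r > 0, 0 < μ (ball x r)) ∧
  Tendsto (fun r : ℝ => (μ (ball x r)).toReal⁻¹ * ∫ y in ball x r, f y ∂μ)
    (𝓝[>] 0) (𝓝 (f x))

/-! ### Averages and continuity of integral transforms -/

/-- Cauchy–Schwarz against the constant function `1`. -/
theorem sq_integral_le {Y : Type*} [MeasurableSpace Y] (ν : Measure Y) [IsFiniteMeasure ν]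
    {g : Y → ℝ} (hg : MemLp g 2 ν) :
    (∫ y, g y ∂ν) ^ 2 ≤ ν.real Set.univ * ∫ y, g y ^ 2 ∂ν := by
  have h1 : Integrable g ν := hg.integrable one_le_two
  have h2 := hg.integrable_sq
  rcases eq_or_lt_of_le (measureReal_nonneg (μ := ν) (s := Set.univ)) with hq | hq
  · have : ν = 0 := by
      rw [← Measure.measure_univ_eq_zero]
      exact (measureReal_eq_zero_iff).1 hq.symm
    simp [this]
  set q := ν.real Set.univ with hqdef
  set t := ∫ y, g y ∂ν with ht
  have key : 0 ≤ ∫ y, (q * g y - t) ^ 2 ∂ν := integral_nonneg fun y => sq_nonneg _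
  have e : ∫ y, (q * g y - t) ^ 2 ∂ν = q ^ 2 * ∫ y, g y ^ 2 ∂ν - 2 * q * t * t + q * t ^ 2 := by
    have : (fun y => (q * g y - t) ^ 2)
        = fun y => q ^ 2 * g y ^ 2 - 2 * q * t * g y + t ^ 2 := by
      funext y; ring
    have h3 : Integrable (fun y => q ^ 2 * g y ^ 2 - 2 * q * t * g y) ν :=
      (h2.const_mul _).sub (h1.const_mul _)
    rw [this, integral_add h3 (integrable_const _),
      integral_sub (h2.const_mul _) (h1.const_mul _), integral_const_mul, integral_const_mul,
      integral_const, smul_eq_mul]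
  rw [e] at key
  have : 0 ≤ q * (q * (∫ y, g y ^ 2 ∂ν) - t ^ 2) := by nlinarith
  have := nonneg_of_mul_nonneg_right this hq
  linarith

/-- Averages of `g` over balls shrinking to a point of continuity `x` converge to `g x`. -/
theorem tendsto_ball_average {Y : Type*} [MetricSpace Y] [MeasurableSpace Y]
    [OpensMeasurableSpace Y] (ν : Measure Y) [IsFiniteMeasure ν] {g : Y → ℝ}
    (hg : Integrable g ν) {x : Y} (hx : ContinuousAt g x) (hpos : ∀ r > 0, 0 < ν (ball x r)) :
    Tendsto (fun r : ℝ => (ν.real (ball x r))⁻¹ * ∫ y in ball x r, g y ∂ν)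
      (𝓝[>] 0) (𝓝 (g x)) := by
  rw [Metric.tendsto_nhds]
  intro ε hε
  obtain ⟨δ, hδ, h⟩ := Metric.continuousAt_iff.1 hx (ε / 2) (half_pos hε)
  have : Set.Ioo (0 : ℝ) δ ∈ 𝓝[>] (0 : ℝ) := Ioo_mem_nhdsGT hδ
  filter_upwards [this] with r hr
  have hq : 0 < ν.real (ball x r) :=
    ENNReal.toReal_pos (hpos r hr.1).ne' (measure_ne_top _ _)
  have hb : ‖∫ y in ball x r, (g y - g x) ∂ν‖ ≤ ε / 2 * ν.real (ball x r) := by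
    refine norm_setIntegral_le_of_norm_le_const (measure_lt_top _ _) fun y hy => ?_
    exact (h ((mem_ball.1 hy).trans hr.2)).le
  rw [integral_sub hg.integrableOn (integrable_const _), setIntegral_const, smul_eq_mul] at hb
  have e : (ν.real (ball x r))⁻¹ * ∫ y in ball x r, g y ∂ν - g x
      = (ν.real (ball x r))⁻¹ * (∫ y in ball x r, g y ∂ν - ν.real (ball x r) * g x) := by
    field_simp
  rw [Real.dist_eq, e, abs_mul, abs_of_pos (inv_pos.2 hq)]
  rw [Real.norm_eq_abs] at hb
  calc _ ≤ (ν.real (ball x r))⁻¹ * (ε / 2 * ν.real (ball x r)) := by gcongr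
    _ = ε / 2 := by field_simp
    _ < ε := half_lt_self hε

/-- Integral transforms with continuous kernels of at most quadratic growth are continuous. -/
theorem continuous_integral_of_quadratic_growth {X : Type*} [MetricSpace X]
    [SecondCountableTopology X] [MeasurableSpace X] [BorelSpace X] (μ : Measure X)
    (z : X) (C : ℝ) {F : X → X → ℝ}
    (hF : Continuous fun p : X × X => F p.1 p.2)
    (hb : ∀ x y, |F x y| ≤ C + 2 * dist z x ^ 2 + 2 * dist z y ^ 2)
    {h : X → ℝ} (hh : Integrable h μ) (hh2 : Integrable (fun y => dist z y ^ 2 * h y) μ) :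
    Continuous fun x => ∫ y, F x y * h y ∂μ := by
  rw [continuous_iff_continuousAt]
  intro x₀
  refine continuousAt_of_dominated
    (bound := fun y => (C + 2 * (dist z x₀ + 1) ^ 2) * |h y| + 2 * |dist z y ^ 2 * h y|)
    ?_ ?_ ((hh.abs.const_mul _).add (hh2.abs.const_mul _)) ?_
  · refine Eventually.of_forall fun x => ?_
    exact (Continuous.aestronglyMeasurable (by fun_prop)).mul hh.1
  · filter_upwards [ball_mem_nhds x₀ one_pos] with x hx
    refine Eventually.of_forall fun y => ?_
    have h1 : dist z x ≤ dist z x₀ + 1 := by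
      have := dist_triangle z x₀ x
      rw [mem_ball, dist_comm] at hx
      linarith
    have h2 : dist z x ^ 2 ≤ (dist z x₀ + 1) ^ 2 := by gcongr
    rw [Real.norm_eq_abs, abs_mul, abs_mul, abs_of_nonneg (sq_nonneg (dist z y))]
    nlinarith [hb x y, abs_nonneg (h y)]
  · exact Eventually.of_forall fun y => Continuous.continuousAt (by fun_prop)

/-! ### The centered kernel -/

theorem abs_mdsK_le {X : Type*} [MetricSpace X] (z x y : X) :
    |mdsK x y| ≤ dist z x ^ 2 + dist z y ^ 2 := by
  have h := dist_triangle_left x y z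
  have h0 : 0 ≤ dist x y := dist_nonneg
  have : dist x y ^ 2 ≤ (dist z x + dist z y) ^ 2 := by gcongr
  rw [mdsK, abs_le]
  constructor <;> nlinarith [sq_nonneg (dist z x - dist z y)]

theorem mdsK_comm {X : Type*} [MetricSpace X] (x y : X) : mdsK x y = mdsK y x := by
  simp [mdsK, dist_comm]

theorem continuous_mdsK {X : Type*} [MetricSpace X] :
    Continuous fun p : X × X => mdsK p.1 p.2 := by
  unfold mdsK; fun_prop

theorem memLp_dist_sq {X : Type*} [MetricSpace X] [SecondCountableTopology X]
    [MeasurableSpace X] [BorelSpace X] (μ : Measure X) {z : X}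
    (hz : Integrable (fun y => dist z y ^ 4) μ) : MemLp (fun y => dist z y ^ 2) 2 μ := by
  rw [memLp_two_iff_integrable_sq (by fun_prop)]
  simpa only [← pow_mul] using hz

theorem mdsKT_eq {X : Type*} [MetricSpace X] [MeasurableSpace X] (μ : Measure X) (x y : X) :
    mdsKT μ x y = mdsK x y - (∫ w, mdsK x w ∂μ) - (∫ w, mdsK y w ∂μ)
      + ∫ v, ∫ w, mdsK v w ∂μ ∂μ := by
  unfold mdsKT
  simp only [mdsK_comm _ y]

theorem abs_integral_mdsK_le {X : Type*} [MetricSpace X] [MeasurableSpace X] (μ : Measure X)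
    [IsProbabilityMeasure μ] {z : X} (hz : Integrable (fun y => dist z y ^ 2) μ) (x : X) :
    |∫ y, mdsK x y ∂μ| ≤ dist z x ^ 2 + ∫ y, dist z y ^ 2 ∂μ := by
  have := norm_integral_le_of_norm_le (f := fun y => mdsK x y)
    ((integrable_const (μ := μ) (dist z x ^ 2)).add hz) (Eventually.of_forall fun y => abs_mdsK_le z x y)
  simp only [Pi.add_apply] at this
  rw [integral_add (integrable_const _) hz] at this
  simpa using this

section Kernel

variable {X : Type*} [MetricSpace X] [SecondCountableTopology X] [MeasurableSpace X]
  [BorelSpace X] (μ : Measure X) [IsProbabilityMeasure μ] {z : X}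

theorem continuous_integral_mdsK (hz : Integrable (fun y => dist z y ^ 2) μ) :
    Continuous fun x => ∫ y, mdsK x y ∂μ := by
  have := continuous_integral_of_quadratic_growth μ z 0 (F := mdsK) continuous_mdsK
    (fun x y => by
      nlinarith [abs_mdsK_le z x y, sq_nonneg (dist z x), sq_nonneg (dist z y)])
    (h := fun _ => 1) (integrable_const _) (by simpa using hz)
  simpa using this

theorem integrable_integral_mdsK (hz : Integrable (fun y => dist z y ^ 2) μ) :
    Integrable (fun x => ∫ y, mdsK x y ∂μ) μ :=
  Integrable.mono' (hz.add (integrable_const _))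
    (continuous_integral_mdsK μ hz).aestronglyMeasurable
    (Eventually.of_forall fun x => abs_integral_mdsK_le μ hz x)

theorem continuous_mdsKT (hz : Integrable (fun y => dist z y ^ 2) μ) :
    Continuous fun p : X × X => mdsKT μ p.1 p.2 := by
  have := continuous_integral_mdsK μ hz
  have h2 := continuous_mdsK (X := X)
  simp only [mdsKT_eq]
  exact ((h2.sub (this.comp continuous_fst)).sub (this.comp continuous_snd)).add continuous_const

theorem abs_mdsKT_le (hz : Integrable (fun y => dist z y ^ 2) μ) (x y : X) :
    |mdsKT μ x y| ≤ 4 * (∫ w, dist z w ^ 2 ∂μ) + 2 * dist z x ^ 2 + 2 * dist z y ^ 2 := by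
  have h1 := abs_le.1 (abs_mdsK_le z x y)
  have h2 := abs_le.1 (abs_integral_mdsK_le μ hz x)
  have h3 := abs_le.1 (abs_integral_mdsK_le μ hz y)
  have h4 : |∫ v, ∫ w, mdsK v w ∂μ ∂μ| ≤ 2 * ∫ w, dist z w ^ 2 ∂μ := by
    have := norm_integral_le_of_norm_le (f := fun v => ∫ w, mdsK v w ∂μ)
      (hz.add (integrable_const (μ := μ) (∫ w, dist z w ^ 2 ∂μ))) (Eventually.of_forall fun x => abs_integral_mdsK_le μ hz x)
    simp only [Pi.add_apply] at this
    rw [integral_add hz (integrable_const _)] at this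
    simp only [integral_const, probReal_univ, one_smul] at this
    rw [Real.norm_eq_abs] at this
    linarith
  have h4 := abs_le.1 h4
  rw [mdsKT_eq, abs_le]
  constructor <;> linarith [h1.1, h1.2, h2.1, h2.2, h3.1, h3.2, h4.1, h4.2]

theorem memLp_mdsKT (hz : Integrable (fun y => dist z y ^ 4) μ) :
    MemLp (fun p : X × X => mdsKT μ p.1 p.2) 2 (μ.prod μ) := by
  have hm := memLp_dist_sq μ hz
  have hz2 := hm.integrable one_le_two
  set C := 4 * ∫ w, dist z w ^ 2 ∂μ with hC
  have hb : MemLp (fun p : X × X => C + 2 * dist z p.1 ^ 2 + 2 * dist z p.2 ^ 2) 2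
      (μ.prod μ) := by
    have h1 : MemLp (fun p : X × X => 2 * dist z p.1 ^ 2) 2 (μ.prod μ) :=
      (hm.const_mul 2).comp_fst μ
    have h2 : MemLp (fun p : X × X => 2 * dist z p.2 ^ 2) 2 (μ.prod μ) :=
      (hm.const_mul 2).comp_snd μ
    exact ((memLp_const C).add h1).add h2
  exact hb.mono' (continuous_mdsKT μ hz2).aestronglyMeasurable
    (Eventually.of_forall fun p => abs_mdsKT_le μ hz2 p.1 p.2)

theorem integral_mdsKT_diag (hz : Integrable (fun y => dist z y ^ 2) μ) :
    (∫ x, mdsKT μ x x ∂μ) = (1/2) * ∫ x, ∫ y, dist x y ^ 2 ∂μ ∂μ := by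
  have hi := integrable_integral_mdsK μ hz
  have e : (fun x => mdsKT μ x x)
      = fun x => (∫ v, ∫ w, mdsK v w ∂μ ∂μ) - 2 * ∫ w, mdsK x w ∂μ := by
    funext x; rw [mdsKT_eq]; simp only [mdsK, dist_self]; ring
  rw [e, integral_sub (integrable_const _) (hi.const_mul _), integral_const_mul]
  simp only [integral_const, probReal_univ, one_smul]
  simp only [mdsK, integral_const_mul]
  ring

/-- Eigenfunctions with nonzero eigenvalue coincide everywhere with their continuous
representative. -/
theorem continuous_eigenfunction (hz : Integrable (fun y => dist z y ^ 4) μ) {c : ℝ} (hc : c ≠ 0)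
    {u : X → ℝ} (hu : MemLp u 2 μ)
    (heig : ∀ x, c * u x = ∫ y, mdsKT μ x y * u y ∂μ) : Continuous u := by
  have hm := memLp_dist_sq μ hz
  have hz2 := hm.integrable one_le_two
  have h := continuous_integral_of_quadratic_growth μ z (4 * ∫ w, dist z w ^ 2 ∂μ)
    (continuous_mdsKT μ hz2) (abs_mdsKT_le μ hz2) (hu.integrable one_le_two) (hm.integrable_mul hu)
  have e : u = fun x => c⁻¹ * ∫ y, mdsKT μ x y * u y ∂μ := by
    funext x; rw [← heig]; field_simp
  rw [e]
  exact continuous_const.mul h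

end Kernel

/-! ### The spectral expansion on the diagonal -/

/-- A series of nonnegative functions with summable integrals converges almost everywhere. -/
theorem ae_summable_of_summable_integral {Y : Type*} [MeasurableSpace Y] {ν : Measure Y}
    {g : ℕ → Y → ℝ} (hm : ∀ i, Measurable (g i)) (h0 : ∀ i y, 0 ≤ g i y)
    (hi : ∀ i, Integrable (g i) ν) (hs : Summable fun i => ∫ y, g i y ∂ν) :
    ∀ᵐ y ∂ν, Summable fun i => g i y := by
  have : ∫⁻ y, ∑' i, ENNReal.ofReal (g i y) ∂ν ≠ ⊤ := by
    rw [lintegral_tsum fun i => (hm i).ennreal_ofReal.aemeasurable]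
    simp_rw [← ofReal_integral_eq_lintegral_ofReal (hi _) (Eventually.of_forall (h0 _))]
    exact hs.tsum_ofReal_ne_top
  have hmeas : Measurable fun y => ∑' i, ENNReal.ofReal (g i y) :=
    Measurable.tsum fun i => (hm i).ennreal_ofReal
  filter_upwards [ae_lt_top hmeas this] with y hy
  have := ENNReal.summable_toReal hy.ne
  simpa only [ENNReal.toReal_ofReal (h0 _ _)] using this

/-- On a probability space, `L²`-convergence passes to integrals over any set. -/
theorem tendsto_setIntegral_of_L2 {Y : Type*} [MeasurableSpace Y] (ν : Measure Y)
    [IsProbabilityMeasure ν] {G : Y → ℝ} {S : ℕ → Y → ℝ} (hG : MemLp G 2 ν)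
    (hS : ∀ n, MemLp (S n) 2 ν)
    (h : Tendsto (fun n => ∫ y, (G y - S n y) ^ 2 ∂ν) atTop (𝓝 0)) (s : Set Y) :
    Tendsto (fun n => ∫ y in s, S n y ∂ν) atTop (𝓝 (∫ y in s, G y ∂ν)) := by
  rw [tendsto_iff_norm_sub_tendsto_zero]
  have h' : Tendsto (fun n => √(∫ y, (G y - S n y) ^ 2 ∂ν)) atTop (𝓝 0) := by
    simpa using h.sqrt
  refine squeeze_zero (fun _ => norm_nonneg _) (fun n => ?_) h'
  have hD : MemLp (fun y => G y - S n y) 2 ν := hG.sub (hS n)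
  rw [norm_sub_rev, ← integral_sub (hG.integrable one_le_two).integrableOn
    ((hS n).integrable one_le_two).integrableOn, Real.norm_eq_abs]
  refine Real.abs_le_sqrt ?_
  have h1 := sq_integral_le (ν.restrict s) (hD.restrict s)
  have h2 : (ν.restrict s).real Set.univ ≤ 1 := by
    rw [measureReal_restrict_apply_univ]; exact measureReal_le_one
  have h3 : ∫ y in s, (G y - S n y) ^ 2 ∂ν ≤ ∫ y, (G y - S n y) ^ 2 ∂ν :=
    setIntegral_le_integral hD.integrable_sq (Eventually.of_forall fun y => sq_nonneg _)
  have h4 : 0 ≤ ∫ y in s, (G y - S n y) ^ 2 ∂ν := integral_nonneg fun y => sq_nonneg _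
  nlinarith

/-- The tail of the spectral expansion, integrated over the square `s ×ˢ s`, is dominated by the
tail of `∑ |cᵢ| uᵢ²` integrated over `s`. -/
theorem abs_setIntegral_sub_sum_le {X : Type*} [MeasurableSpace X] (μ : Measure X)
    [IsProbabilityMeasure μ] {G : X × X → ℝ} {c : ℕ → ℝ} {u : ℕ → X → ℝ}
    (hG : MemLp G 2 (μ.prod μ)) (hu : ∀ i, MemLp (u i) 2 μ)
    (h : Tendsto (fun n => ∫ p, (G p - ∑ i ∈ Finset.range n, c i * u i p.1 * u i p.2) ^ 2
      ∂(μ.prod μ)) atTop (𝓝 0))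
    {f : X → ℝ} (hf : Integrable f μ) (hfu : ∀ᵐ x ∂μ, HasSum (fun i => |c i| * u i x ^ 2) (f x))
    (s : Set X) (N : ℕ) :
    |(∫ p in s ×ˢ s, G p ∂(μ.prod μ)) - ∑ i ∈ Finset.range N, c i * (∫ x in s, u i x ∂μ) ^ 2|
      ≤ μ.real s * ((∫ x in s, f x ∂μ)
        - ∑ i ∈ Finset.range N, |c i| * ∫ x in s, u i x ^ 2 ∂μ) := by
  have hterm : ∀ i, MemLp (fun p : X × X => c i * u i p.1 * u i p.2) 2 (μ.prod μ) := by
    intro i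
    have hm : AEStronglyMeasurable (fun p : X × X => c i * u i p.1 * u i p.2) (μ.prod μ) :=
      (((hu i).1.comp_fst).const_mul _).mul ((hu i).1.comp_snd)
    rw [memLp_two_iff_integrable_sq hm]
    have := ((hu i).integrable_sq.mul_prod (hu i).integrable_sq).const_mul (c i ^ 2)
    refine this.congr (Eventually.of_forall fun p => ?_)
    simp only; ring
  have hlim := tendsto_setIntegral_of_L2 (μ.prod μ) hG
    (fun n => memLp_finsetSum (Finset.range n) fun i _ => hterm i) h (s ×ˢ s)
  have e : ∀ n, ∫ p in s ×ˢ s, ∑ i ∈ Finset.range n, c i * u i p.1 * u i p.2 ∂(μ.prod μ)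
      = ∑ i ∈ Finset.range n, c i * (∫ x in s, u i x ∂μ) ^ 2 := by
    intro n
    rw [integral_finsetSum _ fun i _ => ((hterm i).integrable one_le_two).integrableOn]
    refine Finset.sum_congr rfl fun i _ => ?_
    rw [setIntegral_prod_mul (fun x => c i * u i x) (u i), integral_const_mul]
    ring
  simp_rw [e] at hlim
  have hpart : ∀ n, ∑ i ∈ Finset.range n, |c i| * ∫ x in s, u i x ^ 2 ∂μ ≤ ∫ x in s, f x ∂μ := by
    intro n
    have hI : ∀ i ∈ Finset.range n, IntegrableOn (fun x => |c i| * u i x ^ 2) s μ := fun i _ =>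
      ((hu i).integrable_sq.const_mul _).integrableOn
    simp_rw [← integral_const_mul]
    rw [← integral_finsetSum _ hI]
    refine integral_mono_ae (integrable_finsetSum _ hI) hf.integrableOn ?_
    filter_upwards [ae_restrict_of_ae hfu] with x hx
    exact sum_le_hasSum _ (fun i _ => by positivity) hx
  refine le_of_tendsto ((hlim.sub_const _).abs) ?_
  filter_upwards [eventually_ge_atTop N] with n hn
  rw [← Finset.sum_Ico_eq_sub _ hn]
  have hCS : ∀ i, |c i * (∫ x in s, u i x ∂μ) ^ 2|
      ≤ μ.real s * (|c i| * ∫ x in s, u i x ^ 2 ∂μ) := by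
    intro i
    have := sq_integral_le (μ.restrict s) ((hu i).restrict s)
    rw [measureReal_restrict_apply_univ] at this
    rw [abs_mul, abs_of_nonneg (sq_nonneg (∫ x in s, u i x ∂μ)), mul_left_comm]
    gcongr
  calc _ ≤ ∑ i ∈ Finset.Ico N n, |c i * (∫ x in s, u i x ∂μ) ^ 2| := Finset.abs_sum_le_sum_abs _ _
    _ ≤ ∑ i ∈ Finset.Ico N n, μ.real s * (|c i| * ∫ x in s, u i x ^ 2 ∂μ) :=
      Finset.sum_le_sum fun i _ => hCS i
    _ = μ.real s * (∑ i ∈ Finset.range n, |c i| * ∫ x in s, u i x ^ 2 ∂μ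
        - ∑ i ∈ Finset.range N, |c i| * ∫ x in s, u i x ^ 2 ∂μ) := by
      rw [← Finset.mul_sum, Finset.sum_Ico_eq_sub _ hn]
    _ ≤ _ := by gcongr; exact hpart n

/-- At a Lebesgue point of `f = ∑ |cᵢ| uᵢ²` where this series converges, the spectral expansion of
a continuous kernel `G` holds on the diagonal. -/
theorem hasSum_diag {X : Type*} [MetricSpace X] [SecondCountableTopology X] [MeasurableSpace X]
    [BorelSpace X] (μ : Measure X)
    [IsProbabilityMeasure μ] {G : X × X → ℝ} {c : ℕ → ℝ} {u : ℕ → X → ℝ}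
    (hGc : Continuous G)
    (hG : MemLp G 2 (μ.prod μ)) (hu : ∀ i, MemLp (u i) 2 μ)
    (huc : ∀ i, c i ≠ 0 → Continuous (u i))
    (h : Tendsto (fun n => ∫ p, (G p - ∑ i ∈ Finset.range n, c i * u i p.1 * u i p.2) ^ 2
      ∂(μ.prod μ)) atTop (𝓝 0))
    {f : X → ℝ} (hf : Integrable f μ) (hfu : ∀ᵐ x ∂μ, HasSum (fun i => |c i| * u i x ^ 2) (f x))
    {x : X} (hx : IsLebPoint μ f x) (hfx : HasSum (fun i => |c i| * u i x ^ 2) (f x)) :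
    HasSum (fun i => c i * u i x ^ 2) (G (x, x)) := by
  obtain ⟨hpos, hleb⟩ := hx
  have hGav : Tendsto (fun r : ℝ => (μ.real (ball x r))⁻¹ ^ 2 *
      ∫ p in ball x r ×ˢ ball x r, G p ∂(μ.prod μ)) (𝓝[>] 0) (𝓝 (G (x, x))) := by
    have := tendsto_ball_average (μ.prod μ) (hG.integrable one_le_two) (x := (x, x))
      hGc.continuousAt (fun r hr => by
        rw [← ball_prod_same, Measure.prod_prod]
        exact ENNReal.mul_pos (hpos r hr).ne' (hpos r hr).ne')
    simp only [← ball_prod_same, measureReal_prod_prod] at this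
    refine this.congr fun r => ?_
    rw [mul_inv, sq]
  have hav1 : ∀ i, Tendsto (fun r : ℝ => c i * ((μ.real (ball x r))⁻¹ *
      ∫ y in ball x r, u i y ∂μ) ^ 2) (𝓝[>] 0) (𝓝 (c i * u i x ^ 2)) := by
    intro i
    by_cases hc : c i = 0
    · simp [hc]
    exact ((tendsto_ball_average μ ((hu i).integrable one_le_two) (huc i hc).continuousAt
      hpos).pow 2).const_mul _
  have hav2 : ∀ i, Tendsto (fun r : ℝ => |c i| * ((μ.real (ball x r))⁻¹ *
      ∫ y in ball x r, u i y ^ 2 ∂μ)) (𝓝[>] 0) (𝓝 (|c i| * u i x ^ 2)) := by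
    intro i
    by_cases hc : c i = 0
    · simp [hc]
    exact (tendsto_ball_average μ (hu i).integrable_sq ((huc i hc).pow 2).continuousAt
      hpos).const_mul _
  have hbound : ∀ N, |G (x, x) - ∑ i ∈ Finset.range N, c i * u i x ^ 2|
      ≤ f x - ∑ i ∈ Finset.range N, |c i| * u i x ^ 2 := by
    intro N
    refine le_of_tendsto_of_tendsto
      (hGav.sub (tendsto_finsetSum (Finset.range N) fun i _ => hav1 i)).abs
      (Tendsto.sub hleb (tendsto_finsetSum (Finset.range N) fun i _ => hav2 i)) ?_
    filter_upwards [self_mem_nhdsWithin] with r hr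
    have hq : 0 < μ.real (ball x r) :=
      ENNReal.toReal_pos (hpos r hr).ne' (measure_ne_top _ _)
    have key := abs_setIntegral_sub_sum_le μ hG hu h hf hfu (ball x r) N
    change _ ≤ (μ.real (ball x r))⁻¹ * _ - _
    set q := μ.real (ball x r) with hqd
    have e1 : ∑ i ∈ Finset.range N, c i * (q⁻¹ * ∫ y in ball x r, u i y ∂μ) ^ 2
        = q⁻¹ ^ 2 * ∑ i ∈ Finset.range N, c i * (∫ y in ball x r, u i y ∂μ) ^ 2 := by
      rw [Finset.mul_sum]; exact Finset.sum_congr rfl fun i _ => by ring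
    have e2 : ∑ i ∈ Finset.range N, |c i| * (q⁻¹ * ∫ y in ball x r, u i y ^ 2 ∂μ)
        = q⁻¹ * ∑ i ∈ Finset.range N, |c i| * ∫ y in ball x r, u i y ^ 2 ∂μ := by
      rw [Finset.mul_sum]; exact Finset.sum_congr rfl fun i _ => by ring
    rw [e1, e2, ← mul_sub, ← mul_sub, abs_mul, abs_of_nonneg (sq_nonneg q⁻¹)]
    calc _ ≤ q⁻¹ ^ 2 * (q * _) := by gcongr
      _ = _ := by field_simp
  have hsum : Summable fun i => c i * u i x ^ 2 := by
    refine Summable.of_abs ?_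
    simpa only [abs_mul, abs_of_nonneg (sq_nonneg (u _ x))] using hfx.summable
  rw [hsum.hasSum_iff_tendsto_nat, tendsto_iff_norm_sub_tendsto_zero]
  have h0 : Tendsto (fun N => f x - ∑ i ∈ Finset.range N, |c i| * u i x ^ 2) atTop (𝓝 0) := by
    simpa using hfx.tendsto_sum_nat.const_sub (f x)
  refine squeeze_zero (fun _ => norm_nonneg _) (fun N => ?_) h0
  rw [norm_sub_rev]
  exact hbound N

/-- The trace formula: if `T` is trace class and μ-a.e. point is a Lebesgue point of
`f = Σ |λᵢ| uᵢ²`, then `Σᵢ λᵢ = ∫ k_T(x,x) dμ(x) = (1/2) ∫∫ d(x,y)² dμ dμ`. -/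
theorem mds_trace_formula
    {X : Type*} [MetricSpace X] [CompleteSpace X] [SecondCountableTopology X]
    [MeasurableSpace X] [BorelSpace X]
    (μ : Measure X) [IsProbabilityMeasure μ]
    (hmom : ∃ z : X, Integrable (fun y => dist z y ^ 4) μ)
    (lam : ℕ → ℝ) (u : ℕ → X → ℝ)
    (hmeas : ∀ i, Measurable (u i))
    (heig : ∀ i, lam i ≠ 0 → ∀ x, lam i * u i x = ∫ y, mdsKT μ x y * u i y ∂μ)
    (horth : ∀ i j, (∫ x, u i x * u j x ∂μ) = if i = j then 1 else 0)
    (htrace : Summable fun i => |lam i|)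
    (hbasis : Tendsto
      (fun n => ∫ p, (mdsKT μ p.1 p.2 - ∑ i ∈ Finset.range n, lam i * u i p.1 * u i p.2) ^ 2
        ∂(μ.prod μ)) atTop (𝓝 0))
    (f : X → ℝ) (hf : f = fun x => ∑' i, |lam i| * (u i x) ^ 2)
    (hfint : Integrable f μ)
    (hleb : ∀ᵐ x ∂μ, IsLebPoint μ f x) :
    (∑' i, lam i) = (∫ x, mdsKT μ x x ∂μ) ∧
    (∫ x, mdsKT μ x x ∂μ) = (1/2) * ∫ x, ∫ y, dist x y ^ 2 ∂μ ∂μ := by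
  obtain ⟨z, hz⟩ := hmom
  have hz2 := (memLp_dist_sq μ hz).integrable one_le_two
  refine ⟨?_, integral_mdsKT_diag μ hz2⟩
  have hone : ∀ i, ∫ x, u i x ^ 2 ∂μ = 1 := fun i => by
    simpa [sq] using horth i i
  have husq : ∀ i, Integrable (fun x => u i x ^ 2) μ := fun i =>
    integrable_of_integral_eq_one (hone i)
  have hu : ∀ i, MemLp (u i) 2 μ := fun i =>
    (memLp_two_iff_integrable_sq (hmeas i).aestronglyMeasurable).2 (husq i)
  have huc : ∀ i, lam i ≠ 0 → Continuous (u i) := fun i hi =>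
    continuous_eigenfunction μ hz hi (hu i) (heig i hi)
  -- Where the series diverges, `tsum` gives `f` a junk value; this happens only on a null set.
  have hfu : ∀ᵐ x ∂μ, HasSum (fun i => |lam i| * u i x ^ 2) (f x) := by
    have := ae_summable_of_summable_integral (ν := μ) (g := fun i x => |lam i| * u i x ^ 2)
      (fun i => ((hmeas i).pow_const 2).const_mul _) (fun i x => by positivity)
      (fun i => (husq i).const_mul _) (by simpa only [integral_const_mul, hone, mul_one])
    filter_upwards [this] with x hx
    rw [hf]
    exact hx.hasSum
  have hdiag : ∀ᵐ x ∂μ, ∑' i, lam i * u i x ^ 2 = mdsKT μ x x := by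
    filter_upwards [hfu, hleb] with x hx hx'
    exact (hasSum_diag μ (continuous_mdsKT μ hz2) (memLp_mdsKT μ hz) hu huc hbasis hfint hfu
      hx' hx).tsum_eq
  have hsum := hasSum_integral_of_summable_integral_norm (μ := μ)
    (F := fun i x => lam i * u i x ^ 2) (fun i => (husq i).const_mul _) (by
      simpa only [norm_mul, Real.norm_eq_abs, abs_of_nonneg (sq_nonneg (u _ _)),
        integral_const_mul, hone, mul_one])
  simp only [integral_const_mul, hone, mul_one] at hsum
  rw [hsum.tsum_eq]
  exact integral_congr_ae hdiag
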